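/- Let P and P̂ be transition kernels on a finite MDP with rewards bounded in [0, R_max], discount γ ∈ [0,1), and suppose max_{(s,a)} ‖P(·|s,a) − P̂(·|s,a)‖₁ ≤ ε. Then for any stationary policy π, the value functions satisfy ‖V^π_P − V^π_{P̂}‖_∞ ≤ γ ε R_max / (2(1−γ)²) · 2 = γ ε R_max / (1−γ)². -/

import Mathlib

/-!
Both value functions are fixed points of `γ`-contracting Bellman operators, so a sup-norm bound on
the one-step defect yields a bound on the function itself after division by `1 - γ`
(`abs_le_of_selfbound`). This is used twice. First, the rewards are at most `Rmax`, so
`|Vhat| ≤ Rmax / (1 - γ)`. Second, with `D = V - Vhat`,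
`P V - Phat Vhat = P D + (P - Phat) Vhat`, and the last term is at most `ε * Rmax / (1 - γ)` by the
`ℓ¹` error bound; so `D` has one-step defect `γ * ε * Rmax / (1 - γ)`.
-/

theorem abs_weighted_sum_le {ι : Type*} [Fintype ι] (w f : ι → ℝ) (M : ℝ)
    (hw0 : ∀ i, 0 ≤ w i) (hw1 : ∑ i, w i = 1) (hf : ∀ i, |f i| ≤ M) :
    |∑ i, w i * f i| ≤ M :=
  calc |∑ i, w i * f i| ≤ ∑ i, |w i * f i| := Finset.abs_sum_le_sum_abs _ _
    _ ≤ ∑ i, w i * M := by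
        refine Finset.sum_le_sum fun i _ => ?_
        rw [abs_mul, abs_of_nonneg (hw0 i)]
        exact mul_le_mul_of_nonneg_left (hf i) (hw0 i)
    _ = M := by rw [← Finset.sum_mul, hw1, one_mul]

/-- The contraction argument: applying the hypothesis with `M = max |D|` gives `M ≤ c + γ * M`. -/
theorem abs_le_of_selfbound {S : Type*} [Fintype S] (D : S → ℝ) (c γ : ℝ) (hγ1 : γ < 1)
    (h : ∀ M, (∀ s, |D s| ≤ M) → ∀ s, |D s| ≤ c + γ * M) (s : S) :
    |D s| ≤ c / (1 - γ) := by
  haveI : Nonempty S := ⟨s⟩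
  obtain ⟨s₀, hs₀⟩ := Finite.exists_max fun s => |D s|
  have h1 := h _ hs₀ s₀
  refine (hs₀ s).trans ?_
  rw [le_div_iff₀ (by linarith)]
  linarith

/-- Simulation lemma: a uniform ℓ1 model error of `ε` yields a value-function
evaluation error of at most `γ ε R_max / (1-γ)²` for any stationary policy. -/
theorem simulation_lemma (S A : Type*) [Fintype S] [Fintype A]
    (P Phat : S → A → S → ℝ) (r : S → A → ℝ) (Rmax γ ε : ℝ)
    (hγ0 : 0 ≤ γ) (hγ1 : γ < 1) (hε : 0 ≤ ε)
    (hr : ∀ s a, 0 ≤ r s a ∧ r s a ≤ Rmax)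
    (hP0 : ∀ s a s', 0 ≤ P s a s') (hP1 : ∀ s a, ∑ s', P s a s' = 1)
    (hPhat0 : ∀ s a s', 0 ≤ Phat s a s') (hPhat1 : ∀ s a, ∑ s', Phat s a s' = 1)
    (herr : ∀ s a, ∑ s', |P s a s' - Phat s a s'| ≤ ε)
    (π : S → A → ℝ) (hπ0 : ∀ s a, 0 ≤ π s a) (hπ1 : ∀ s, ∑ a, π s a = 1)
    (V Vhat : S → ℝ)
    (hV : ∀ s, V s = ∑ a, π s a * (r s a + γ * ∑ s', P s a s' * V s'))
    (hVhat : ∀ s, Vhat s = ∑ a, π s a * (r s a + γ * ∑ s', Phat s a s' * Vhat s')) :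
    ∀ s, |V s - Vhat s| ≤ γ * ε * Rmax / (1 - γ) ^ 2 := by
  have hB : ∀ s, |Vhat s| ≤ Rmax / (1 - γ) := by
    refine abs_le_of_selfbound Vhat Rmax γ hγ1 fun M hM s => ?_
    rw [hVhat s]
    refine abs_weighted_sum_le _ _ _ (hπ0 s) (hπ1 s) fun a => (abs_add_le _ _).trans ?_
    rw [abs_of_nonneg (hr s a).1, abs_mul, abs_of_nonneg hγ0]
    exact add_le_add (hr s a).2 (mul_le_mul_of_nonneg_left
      (abs_weighted_sum_le _ _ _ (hPhat0 s a) (hPhat1 s a) hM) hγ0)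
  have hD : ∀ s, |V s - Vhat s| ≤ γ * (ε * (Rmax / (1 - γ))) / (1 - γ) := by
    refine abs_le_of_selfbound (fun s => V s - Vhat s) _ γ hγ1 fun M hM s => ?_
    have hB0 : 0 ≤ Rmax / (1 - γ) := (abs_nonneg _).trans (hB s)
    have hdecomp : V s - Vhat s = ∑ a, π s a * (γ * (∑ s', (P s a s' - Phat s a s') * Vhat s' +
        ∑ s', P s a s' * (V s' - Vhat s'))) := by
      rw [hV s, hVhat s, ← Finset.sum_sub_distrib]
      refine Finset.sum_congr rfl fun a _ => ?_
      simp only [sub_mul, mul_sub, Finset.sum_sub_distrib]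
      ring
    have hmodel : ∀ a, |∑ s', (P s a s' - Phat s a s') * Vhat s'| ≤ ε * (Rmax / (1 - γ)) := by
      intro a
      calc |∑ s', (P s a s' - Phat s a s') * Vhat s'|
          ≤ ∑ s', |(P s a s' - Phat s a s') * Vhat s'| := Finset.abs_sum_le_sum_abs _ _
        _ ≤ ∑ s', |P s a s' - Phat s a s'| * (Rmax / (1 - γ)) := by
            refine Finset.sum_le_sum fun s' _ => ?_
            rw [abs_mul]
            exact mul_le_mul_of_nonneg_left (hB s') (abs_nonneg _)
        _ ≤ ε * (Rmax / (1 - γ)) := by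
            rw [← Finset.sum_mul]
            exact mul_le_mul_of_nonneg_right (herr s a) hB0
    change |V s - Vhat s| ≤ _
    rw [hdecomp, ← mul_add]
    refine abs_weighted_sum_le _ _ _ (hπ0 s) (hπ1 s) fun a => ?_
    rw [abs_mul, abs_of_nonneg hγ0]
    exact mul_le_mul_of_nonneg_left ((abs_add_le _ _).trans (add_le_add (hmodel a)
      (abs_weighted_sum_le _ _ _ (hP0 s a) (hP1 s a) hM))) hγ0
  intro s
  refine (hD s).trans (le_of_eq ?_)
  have : 1 - γ ≠ 0 := by linarith
  field_simp
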